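/- Let 0 < μ < L and let f : E → ℝ be a differentiable function on a real inner product space E with f ∈ F_{μ,L}, and let f_* := inf_x f(x) (finite by strong convexity). Fix an integer N ≥ 1 and a stepsize γ > 0 with γL ∈ (0,2), γL ≠ 1 and γμ ≠ 1, and let x_{i+1} = x_i − γ∇f(x_i) for i = 0,…,N−1. Then (1/(2L))·‖∇f(x_N)‖² ≤ (f(x_0) − f_*) / ( 1 + γL · min{ (−1 + (1−γμ)^{−2N})/(γμ) , (−1 + (1−γL)^{−2N})/(γL) } ). -/

import Mathlib

/-!
After rescaling to unit stepsize, `f` has curvature in some `[1 - d, 1 + c]`, and each extreme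
curvature `κ` has its own rate `descentRate (1 - κ) N`. Enlarging the class only lowers the rates,
continuously and down to zero, so one may enlarge it until both rates equal their minimum. Two
rates that agree at `N` are ordered at all earlier steps, and this makes the multipliers of four
interpolation inequalities between three consecutive iterates nonnegative. The weighted sum of
these inequalities says that a potential decreases along the iterates; at step `N`, where the rates
agree, this potential is `4 * (c + d)` times `f (x N) + descentRate d N / 2 * ‖∇f (x N)‖ ^ 2`.
The infimum enters through one further step, of length `1 / L`, from `x N`.
-/

open scoped RealInnerProductSpace

section DescentRate

variable {c d t : ℝ} {k N : ℕ}

/-- The sum `t⁻² + t⁻⁴ + ⋯ + t⁻²ᴺ`; it depends on `t` only through `t ^ 2`. -/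
noncomputable def invSqGeomSum (t : ℝ) (N : ℕ) : ℝ :=
  ∑ j ∈ Finset.range N, (t ^ 2)⁻¹ ^ (j + 1)

lemma invSqGeomSum_zero (t : ℝ) : invSqGeomSum t 0 = 0 :=
  Finset.sum_range_zero _

lemma invSqGeomSum_neg (t : ℝ) (N : ℕ) : invSqGeomSum (-t) N = invSqGeomSum t N := by
  simp only [invSqGeomSum, neg_sq]

lemma invSqGeomSum_nonneg (t : ℝ) (N : ℕ) : 0 ≤ invSqGeomSum t N :=
  Finset.sum_nonneg fun _ _ ↦ by positivity

lemma invSqGeomSum_pos (ht : t ≠ 0) (hN : N ≠ 0) : 0 < invSqGeomSum t N :=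
  Finset.sum_pos (fun _ _ ↦ by positivity) (Finset.nonempty_range_iff.2 hN)

lemma inv_sq_le_invSqGeomSum (t : ℝ) (hN : N ≠ 0) : (t ^ 2)⁻¹ ≤ invSqGeomSum t N := by
  refine (pow_one (t ^ 2)⁻¹).symm.trans_le ?_
  exact Finset.single_le_sum (f := fun j ↦ (t ^ 2)⁻¹ ^ (j + 1))
    (fun _ _ ↦ by positivity) (Finset.mem_range.2 (Nat.pos_of_ne_zero hN))

lemma sq_mul_invSqGeomSum_succ (ht : t ≠ 0) (N : ℕ) :
    t ^ 2 * invSqGeomSum t (N + 1) = 1 + invSqGeomSum t N := by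
  have ht2 : t ^ 2 ≠ 0 := pow_ne_zero 2 ht
  simp only [invSqGeomSum, Finset.mul_sum, pow_succ' (t ^ 2)⁻¹, mul_inv_cancel_left₀ ht2]
  rw [Finset.sum_range_succ', pow_zero, add_comm]
  simp only [pow_succ']

lemma one_sub_sq_mul_invSqGeomSum (ht : t ≠ 0) (N : ℕ) :
    (1 - t ^ 2) * invSqGeomSum t N = (t ^ 2)⁻¹ ^ N - 1 := by
  have hrec := sq_mul_invSqGeomSum_succ ht N
  rw [invSqGeomSum, Finset.sum_range_succ, ← invSqGeomSum, mul_add, pow_succ' (t ^ 2)⁻¹,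
    mul_inv_cancel_left₀ (pow_ne_zero 2 ht)] at hrec
  linarith

lemma continuousOn_invSqGeomSum (N : ℕ) : ContinuousOn (invSqGeomSum · N) {0}ᶜ :=
  continuousOn_finsetSum _ fun _ _ ↦
    ((continuous_pow 2).continuousOn.inv₀ fun _ ht ↦ pow_ne_zero 2 ht).pow _

lemma mul_invSqGeomSum_le_mul (hc : 0 < c) (hcd : c ≤ d) (N : ℕ) :
    d * invSqGeomSum d N ≤ c * invSqGeomSum c N := by
  have hd : 0 < d := hc.trans_le hcd
  have term_eq {t : ℝ} (ht : 0 < t) (j : ℕ) :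
      t * (t ^ 2)⁻¹ ^ (j + 1) = t⁻¹ * (t ^ 2)⁻¹ ^ j := by
    rw [pow_succ', ← mul_assoc]
    field_simp
  simp only [invSqGeomSum, Finset.mul_sum, term_eq hc, term_eq hd]
  gcongr

lemma invSqGeomSum_le (hc : 0 < c) (hcd : c ≤ d) (N : ℕ) :
    invSqGeomSum d N ≤ invSqGeomSum c N := by
  refine le_of_mul_le_mul_left ?_ hc
  exact (mul_le_mul_of_nonneg_right hcd (invSqGeomSum_nonneg d N)).trans
    (mul_invSqGeomSum_le_mul hc hcd N)

lemma invSqGeomSum_lt (hc : 0 < c) (hcd : c < d) (hN : N ≠ 0) :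
    invSqGeomSum d N < invSqGeomSum c N := by
  refine lt_of_mul_lt_mul_left ?_ hc.le
  exact (mul_lt_mul_of_pos_right hcd (invSqGeomSum_pos (hc.trans hcd).ne' hN)).trans_le
    (mul_invSqGeomSum_le_mul hc hcd.le N)

/-- The rate `(t⁻²ᴺ - 1) / (1 - t)` of `N` unit steps of gradient descent on a quadratic of
curvature `1 - t`, written as a sum so that it extends continuously to `t = 1`. -/
noncomputable def descentRate (t : ℝ) (N : ℕ) : ℝ :=
  (1 + t) * invSqGeomSum t N

namespace descentRate

lemma zero_right (t : ℝ) : descentRate t 0 = 0 := by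
  rw [descentRate, invSqGeomSum_zero, mul_zero]

lemma neg_eq (c : ℝ) (N : ℕ) : descentRate (-c) N = (1 - c) * invSqGeomSum c N := by
  rw [descentRate, invSqGeomSum_neg, ← sub_eq_add_neg]

lemma nonneg (ht : -1 ≤ t) (N : ℕ) : 0 ≤ descentRate t N :=
  mul_nonneg (by linarith) (invSqGeomSum_nonneg t N)

lemma pos (ht : -1 < t) (ht0 : t ≠ 0) (hN : N ≠ 0) : 0 < descentRate t N :=
  mul_pos (by linarith) (invSqGeomSum_pos ht0 hN)

lemma sq_mul_succ (ht : t ≠ 0) (N : ℕ) :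
    t ^ 2 * descentRate t (N + 1) = descentRate t N + (1 + t) := by
  rw [descentRate, descentRate, mul_left_comm, sq_mul_invSqGeomSum_succ ht]
  ring

lemma one_sub_mul (ht : t ≠ 0) (N : ℕ) :
    (1 - t) * descentRate t N = (t ^ 2)⁻¹ ^ N - 1 := by
  rw [descentRate, ← one_sub_sq_mul_invSqGeomSum ht]
  ring

lemma neg_one_le_one_sub_mul (ht : t ≠ 0) (N : ℕ) : -1 ≤ (1 - t) * descentRate t N := by
  have hpow : 0 ≤ (t ^ 2)⁻¹ ^ N := by positivity
  rw [one_sub_mul ht]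
  linarith

lemma one_sub_eq_div {s : ℝ} (hs0 : s ≠ 0) (hs1 : s ≠ 1) (N : ℕ) :
    descentRate (1 - s) N = (-1 + (1 - s) ^ (-(2 * (N : ℤ)))) / s := by
  have hpow : (1 - s) ^ (-(2 * (N : ℤ))) = ((1 - s) ^ 2)⁻¹ ^ N := by
    rw [zpow_neg, zpow_mul, zpow_natCast, inv_pow, zpow_ofNat]
  rw [eq_div_iff hs0, hpow, neg_add_eq_sub, ← one_sub_mul (sub_ne_zero.2 hs1.symm),
    sub_sub_cancel, mul_comm]

lemma continuousOn (N : ℕ) : ContinuousOn (descentRate · N) {0}ᶜ :=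
  (continuous_const.add continuous_id).continuousOn.mul (continuousOn_invSqGeomSum N)

lemma lt_of_lt (hc : 0 < c) (hcd : c < d) (hN : N ≠ 0) :
    descentRate d N < descentRate c N := by
  have hlt := invSqGeomSum_lt hc hcd hN
  have hle := mul_invSqGeomSum_le_mul hc hcd.le N
  simp only [descentRate]
  linarith

lemma neg_lt_neg (hc : 0 < c) (hc1 : c < 1) (hcd : c < d) (hN : N ≠ 0) :
    descentRate (-d) N < descentRate (-c) N := by
  rw [neg_eq, neg_eq]
  calc (1 - d) * invSqGeomSum d N
      < (1 - c) * invSqGeomSum d N := by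
        gcongr
        exact invSqGeomSum_pos (hc.trans hcd).ne' hN
    _ ≤ (1 - c) * invSqGeomSum c N :=
        mul_le_mul_of_nonneg_left (invSqGeomSum_le hc hcd.le N) (by linarith)

lemma neg_lt (hd : 0 < d) (hdc : d ≤ c) (hN : N ≠ 0) : descentRate (-c) N < descentRate d N := by
  calc descentRate (-c) N = (1 - c) * invSqGeomSum c N := neg_eq c N
    _ ≤ invSqGeomSum c N :=
        mul_le_of_le_one_left (invSqGeomSum_nonneg c N) (sub_le_self 1 (hd.le.trans hdc))
    _ ≤ invSqGeomSum d N := invSqGeomSum_le hd hdc N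
    _ < descentRate d N :=
        lt_mul_of_one_lt_left (invSqGeomSum_pos hd.ne' hN) (lt_add_of_pos_right 1 hd)

lemma exists_eq {m : ℝ} (hm : 0 < m) (hN : N ≠ 0) : ∃ d > 0, descentRate d N = m := by
  have hm' : 0 < m⁻¹ := inv_pos.2 hm
  have hcont : ContinuousOn (descentRate · N) (Set.Icc m⁻¹ (1 + m⁻¹)) :=
    (continuousOn N).mono fun _ ht ↦ (hm'.trans_le ht.1).ne'
  have hlow : descentRate (1 + m⁻¹) N ≤ m := by
    have := neg_one_le_one_sub_mul (by positivity : 1 + m⁻¹ ≠ 0) N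
    rw [sub_add_cancel_left, neg_mul, neg_le_neg_iff, inv_mul_le_iff₀ hm, mul_one] at this
    exact this
  have hhigh : m ≤ descentRate m⁻¹ N := calc
    m ≤ (1 + m⁻¹) * (m⁻¹ ^ 2)⁻¹ := by
      field_simp
      linarith
    _ ≤ descentRate m⁻¹ N :=
      mul_le_mul_of_nonneg_left (inv_sq_le_invSqGeomSum _ hN) (by positivity)
  obtain ⟨d, hd, hdm⟩ := intermediate_value_Icc' (by linarith) hcont ⟨hlow, hhigh⟩
  exact ⟨d, hm'.trans_le hd.1, hdm⟩

lemma exists_neg_eq {m : ℝ} (hm : 0 < m) (hN : N ≠ 0) :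
    ∃ c > 0, c < 1 ∧ descentRate (-c) N = m := by
  have hc₀ : 0 < (1 + m)⁻¹ := by positivity
  have hcont : ContinuousOn (fun c ↦ descentRate (-c) N) (Set.Icc (1 + m)⁻¹ 1) :=
    (continuousOn N).comp continuous_neg.continuousOn fun _ hc ↦
      neg_ne_zero.2 (hc₀.trans_le hc.1).ne'
  have hlow : descentRate (-1) N = 0 := by rw [neg_eq, sub_self, zero_mul]
  have hhigh : m ≤ descentRate (-(1 + m)⁻¹) N := calc
    m ≤ (1 - (1 + m)⁻¹) * ((1 + m)⁻¹ ^ 2)⁻¹ := by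
      field_simp
      nlinarith
    _ ≤ (1 - (1 + m)⁻¹) * invSqGeomSum (1 + m)⁻¹ N :=
      mul_le_mul_of_nonneg_left (inv_sq_le_invSqGeomSum _ hN)
        (sub_nonneg.2 (inv_le_one_of_one_le₀ (by linarith)))
    _ = descentRate (-(1 + m)⁻¹) N := (neg_eq _ N).symm
  obtain ⟨c, hc, hcm⟩ := intermediate_value_Icc' (inv_le_one_of_one_le₀ (by linarith)) hcont
    ⟨hlow.trans_le hm.le, hhigh⟩
  refine ⟨c, hc₀.trans_le hc.1, hc.2.lt_of_ne ?_, hcm⟩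
  rintro rfl
  exact hm.ne (hlow.symm.trans hcm)

end descentRate

lemma sum_range_nonneg_of_sum_range_nonneg {u : ℕ → ℝ} (hu : ∀ j, u j ≤ 0 → u (j + 1) ≤ 0)
    (hN : 0 ≤ ∑ j ∈ Finset.range N, u j) (hk : k ≤ N) : 0 ≤ ∑ j ∈ Finset.range k, u j := by
  by_contra! hneg
  obtain ⟨j, hjk, hj⟩ := Finset.exists_lt_of_sum_lt (hneg.trans_eq Finset.sum_const_zero.symm)
  have htail : ∀ i ≥ j, u i ≤ 0 := fun i hi ↦ Nat.le_induction hj.le (fun n _ ↦ hu n) i hi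
  refine hN.not_gt (lt_of_le_of_lt ?_ hneg)
  rw [← Finset.sum_range_add_sum_Ico u hk]
  refine add_le_of_nonpos_right (Finset.sum_nonpos fun i hi ↦ htail i ?_)
  exact (Finset.mem_range.1 hjk).le.trans (Finset.mem_Ico.1 hi).1

lemma descentRate.neg_le_of_neg_le (hc : 0 < c) (hcd : c ≤ d)
    (h : descentRate (-c) N ≤ descentRate d N) (hk : k ≤ N) :
    descentRate (-c) k ≤ descentRate d k := by
  have hd : 0 < d := hc.trans_le hcd
  set u : ℕ → ℝ := fun j ↦ (1 + d) * (d ^ 2)⁻¹ ^ (j + 1) - (1 - c) * (c ^ 2)⁻¹ ^ (j + 1) with hu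
  have sub_eq (n : ℕ) : descentRate d n - descentRate (-c) n = ∑ j ∈ Finset.range n, u j := by
    rw [neg_eq, descentRate, invSqGeomSum, invSqGeomSum, Finset.mul_sum, Finset.mul_sum,
      ← Finset.sum_sub_distrib]
  have hsign (j : ℕ) (hj : u j ≤ 0) : u (j + 1) ≤ 0 := by
    have hj' := sub_nonpos.1 hj
    have hpos : 0 ≤ (1 + d) * (d ^ 2)⁻¹ ^ (j + 1) := by positivity
    simp only [hu, sub_nonpos, pow_succ _ (j + 1), ← mul_assoc]
    exact mul_le_mul hj' (by gcongr) (by positivity) (hpos.trans hj')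
  rw [← sub_nonneg, sub_eq] at h ⊢
  exact sum_range_nonneg_of_sum_range_nonneg hsign h hk

end DescentRate

section CurvatureBounds

variable {E : Type*} [NormedAddCommGroup E]

lemma fderiv_sub_le_sub_of_convexOn [NormedSpace ℝ E] {s : Set E} {f : E → ℝ} {f' : E →L[ℝ] ℝ}
    {x y : E} (hf : ConvexOn ℝ s f) (hf' : HasFDerivAt f f' y) (hx : x ∈ s) (hy : y ∈ s) :
    f' (x - y) ≤ f x - f y := by
  have hline : HasDerivAt (f ∘ AffineMap.lineMap y x) (f' (x - y)) (0 : ℝ) :=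
    HasFDerivAt.comp_hasDerivAt (0 : ℝ) (by simpa using hf') AffineMap.hasDerivAt_lineMap
  simpa [slope_def_field] using
    (hf.comp_affineMap (AffineMap.lineMap (k := ℝ) y x)).le_slope_of_hasDerivAt
      (by simpa using hy) (by simpa using hx) zero_lt_one hline

variable [InnerProductSpace ℝ E]

lemma bddBelow_range_of_forall_quadratic_le {F : E → ℝ} {v y : E} {r a : ℝ} (ha : 0 < a)
    (h : ∀ x, r + ⟪v, x - y⟫ + a / 2 * ‖x - y‖ ^ 2 ≤ F x) : BddBelow (Set.range F) := by
  have complete_square (u : E) :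
      ⟪v, u⟫ + a / 2 * ‖u‖ ^ 2 = ‖v + a • u‖ ^ 2 / (2 * a) - ‖v‖ ^ 2 / (2 * a) := by
    rw [norm_add_sq_real, real_inner_smul_right, norm_smul, mul_pow, Real.norm_eq_abs, sq_abs]
    field_simp
    ring
  refine ⟨r - ‖v‖ ^ 2 / (2 * a), Set.forall_mem_range.2 fun x ↦ le_trans ?_ (h x)⟩
  have hpos : 0 ≤ ‖v + a • (x - y)‖ ^ 2 / (2 * a) := by positivity
  linarith [complete_square (x - y)]

lemma iInf_le_of_forall_le_quadratic {F : E → ℝ} {v y : E} {b : ℝ} (hb : 0 < b)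
    (hF : BddBelow (Set.range F)) (h : ∀ x, F x ≤ F y + ⟪v, x - y⟫ + b / 2 * ‖x - y‖ ^ 2) :
    ⨅ x, F x ≤ F y - 1 / (2 * b) * ‖v‖ ^ 2 := by
  refine (ciInf_le hF (y - b⁻¹ • v)).trans ((h _).trans_eq ?_)
  rw [sub_sub_cancel_left, inner_neg_right, real_inner_smul_right, real_inner_self_eq_norm_sq,
    norm_neg, norm_smul, mul_pow, Real.norm_eq_abs, sq_abs]
  field_simp
  ring

/-- `F` belongs to the class `F_{a,b}` and has gradient map `G`, encoded without derivatives: at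
every point, `F` lies between its tangent paraboloids of curvatures `a` and `b`. -/
structure CurvatureBounds (a b : ℝ) (F : E → ℝ) (G : E → E) : Prop where
  lower : ∀ x y, F y + ⟪G y, x - y⟫ + a / 2 * ‖x - y‖ ^ 2 ≤ F x
  upper : ∀ x y, F x ≤ F y + ⟪G y, x - y⟫ + b / 2 * ‖x - y‖ ^ 2

/-- The slack, multiplied by `2 * (b - a)`, in the interpolation inequality of the class `F_{a,b}`
for the pair `(x, y)`. -/
noncomputable def interpolationGap (a b : ℝ) (F : E → ℝ) (G : E → E) (x y : E) : ℝ :=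
  2 * (b - a) * (F x - F y - ⟪G y, x - y⟫ - a / 2 * ‖x - y‖ ^ 2)
    - ‖G x - G y - a • (x - y)‖ ^ 2

namespace CurvatureBounds

variable {a b : ℝ} {F : E → ℝ} {G : E → E}

lemma of_convexOn (hG : ∀ y, HasFDerivAt F (innerSL ℝ (G y)) y)
    (hupper : ConvexOn ℝ Set.univ fun z ↦ b / 2 * ‖z‖ ^ 2 - F z)
    (hlower : ConvexOn ℝ Set.univ fun z ↦ F z - a / 2 * ‖z‖ ^ 2) : CurvatureBounds a b F G := by
  have hquad (κ : ℝ) (y : E) :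
      HasFDerivAt (fun z ↦ κ / 2 * ‖z‖ ^ 2) ((κ / 2) • (2 : ℕ) • innerSL ℝ y) y :=
    (hasStrictFDerivAt_norm_sq y).hasFDerivAt.const_mul (κ / 2)
  have hexpand (κ : ℝ) (x y : E) : κ / 2 * ‖x - y‖ ^ 2 =
      κ / 2 * ‖x‖ ^ 2 - κ / 2 * ‖y‖ ^ 2 - κ / 2 * (2 * ⟪y, x - y⟫) := by
    rw [norm_sub_sq_real, inner_sub_right, real_inner_self_eq_norm_sq, real_inner_comm]
    ring
  refine ⟨fun x y ↦ ?_, fun x y ↦ ?_⟩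
  · have h := fderiv_sub_le_sub_of_convexOn hlower ((hG y).sub (hquad a y)) (Set.mem_univ x)
      (Set.mem_univ y)
    simp only [sub_apply, smul_apply, smul_eq_mul, nsmul_eq_mul, Nat.cast_ofNat,
      innerSL_apply_apply] at h
    linarith [hexpand a x y]
  · have h := fderiv_sub_le_sub_of_convexOn hupper ((hquad b y).sub (hG y)) (Set.mem_univ x)
      (Set.mem_univ y)
    simp only [sub_apply, smul_apply, smul_eq_mul, nsmul_eq_mul, Nat.cast_ofNat,
      innerSL_apply_apply] at h
    linarith [hexpand b x y]

lemma mono {a' b' : ℝ} (h : CurvatureBounds a b F G) (ha : a' ≤ a) (hb : b ≤ b') :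
    CurvatureBounds a' b' F G where
  lower x y := le_trans (by gcongr) (h.lower x y)
  upper x y := (h.upper x y).trans (by gcongr)

lemma smul {γ : ℝ} (h : CurvatureBounds a b F G) (hγ : 0 ≤ γ) :
    CurvatureBounds (γ * a) (γ * b) (γ • F) (γ • G) where
  lower x y := by
    have := mul_le_mul_of_nonneg_left (h.lower x y) hγ
    simp only [Pi.smul_apply, smul_eq_mul, real_inner_smul_left]
    linarith
  upper x y := by
    have := mul_le_mul_of_nonneg_left (h.upper x y) hγ
    simp only [Pi.smul_apply, smul_eq_mul, real_inner_smul_left]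
    linarith

lemma inner_gradient_sub_le (h : CurvatureBounds a b F G) (x y v : E) :
    ⟪G x - G y - a • (x - y), v⟫ ≤
      F x - F y - ⟪G y, x - y⟫ - a / 2 * ‖x - y‖ ^ 2 + (b - a) / 2 * ‖v‖ ^ 2 := by
  have hlower := h.lower (x - v) y
  have hupper := h.upper (x - v) x
  rw [sub_right_comm, inner_sub_right, norm_sub_sq_real] at hlower
  rw [sub_sub_cancel_left, inner_neg_right, norm_neg] at hupper
  rw [inner_sub_left, inner_sub_left, real_inner_smul_left]
  linarith

lemma interpolationGap_nonneg (h : CurvatureBounds a b F G) (hab : a < b) (x y : E) :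
    0 ≤ interpolationGap a b F G x y := by
  have hba : 0 < b - a := sub_pos.2 hab
  -- `(b - a)⁻¹ • u` is the vector for which `inner_gradient_sub_le` is strongest.
  set u := G x - G y - a • (x - y) with hu
  have hle := h.inner_gradient_sub_le x y ((b - a)⁻¹ • u)
  rw [← hu, real_inner_smul_right, real_inner_self_eq_norm_sq, norm_smul, mul_pow,
    Real.norm_eq_abs, sq_abs] at hle
  field_simp at hle
  rw [interpolationGap, ← hu]
  linarith

end CurvatureBounds

end CurvatureBounds

section Potential

variable {E : Type*} [NormedAddCommGroup E] [InnerProductSpace ℝ E]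
  {F : E → ℝ} {G : E → E} {c d : ℝ} {N : ℕ}

/-- One step of gradient descent with unit stepsize along the gradient map `G`. -/
def gradientStep (G : E → E) (y : E) : E :=
  y - G y

/-- The potential that decreases along unit steps of gradient descent in the class
`F_{1-d,1+c}`. The weights `A` and `B` stand for the rates of the curvatures `1 - d` and `1 + c`
after the steps already made. -/
noncomputable def descentPotential (c d A B : ℝ) (F : E → ℝ) (G : E → E) (y : E) : ℝ :=
  4 * (c + d) * F y + 2 * (c + d) * A * ‖G y‖ ^ 2
    + (A - B) * (2 * (d - c) * (F (gradientStep G y) - F y) - (1 + c) * (1 + d) * ‖G y‖ ^ 2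
      + ‖G y + G (gradientStep G y)‖ ^ 2)

/-- The multiplier of `interpolationGap` from an iterate to the next one, obtained by matching
coefficients in `descentPotential_gradientStep`. -/
def forwardMultiplier (c d A B : ℝ) : ℝ :=
  (1 - d) * d ^ 2 * A - d * (1 - c) * A + d * (1 + c) * B + (1 + d) * c ^ 2 * B
    + (1 + d) * (c + d)

/-- The multiplier of `interpolationGap` from an iterate to the previous one, obtained by matching
coefficients in `descentPotential_gradientStep`. -/
def backwardMultiplier (c d A B : ℝ) : ℝ :=
  (1 - c) * d ^ 2 * A - c * (1 - d) * A + c * (1 + d) * B + (1 + c) * c ^ 2 * B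
    - (1 - c) * (c + d)

lemma forwardMultiplier_descentRate_nonneg (hc : 0 < c) (hc1 : c < 1) (hcd : c ≤ d) (N : ℕ) :
    0 ≤ forwardMultiplier c d (descentRate d N) (descentRate (-c) N) := by
  have hd : 0 < d := hc.trans_le hcd
  set A := descentRate d N with hA
  set B := descentRate (-c) N with hB
  have hB0 : 0 ≤ B := descentRate.nonneg (by linarith) N
  have hA1 : 0 ≤ d ^ 2 * ((1 - d) * A + 1) :=
    mul_nonneg (sq_nonneg d) (by linarith [descentRate.neg_one_le_one_sub_mul hd.ne' N])
  have hcross : d * (1 - c) * A ≤ c * (1 + d) * B := by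
    have h := mul_le_mul_of_nonneg_left (mul_invSqGeomSum_le_mul hc hcd N)
      (mul_nonneg (sub_nonneg.2 hc1.le) (by positivity : 0 ≤ 1 + d))
    rw [hA, hB, descentRate.neg_eq, descentRate]
    linarith
  calc (0 : ℝ) ≤ d ^ 2 * ((1 - d) * A + 1) + (c * (1 + d) * B - d * (1 - c) * A)
        + (d - c) * B + (1 + d) * c ^ 2 * B + (c + d + c * d) := by
        have := sub_nonneg.2 hcross
        have := sub_nonneg.2 hcd
        positivity
    _ = forwardMultiplier c d A B := by
        rw [forwardMultiplier]
        ring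

lemma backwardMultiplier_descentRate_succ_nonneg (hc : 0 < c) (hc1 : c < 1) (hcd : c ≤ d)
    (N : ℕ) :
    0 ≤ backwardMultiplier c d (descentRate d (N + 1)) (descentRate (-c) (N + 1)) := by
  have hd : 0 < d := hc.trans_le hcd
  have hA0 : 0 ≤ descentRate d N := descentRate.nonneg (by linarith) N
  have hrec := descentRate.sq_mul_succ hd.ne' N
  set A := descentRate d (N + 1) with hA
  set B := descentRate (-c) (N + 1) with hB
  have hB0 : 0 ≤ B := descentRate.nonneg (by linarith) (N + 1)
  have hle : (1 - d) * A ≤ (1 + c) * B := by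
    have hpow : (d ^ 2)⁻¹ ^ (N + 1) ≤ (c ^ 2)⁻¹ ^ (N + 1) := by gcongr
    rw [hA, hB, descentRate.one_sub_mul hd.ne', ← sub_neg_eq_add 1 c,
      descentRate.one_sub_mul (neg_ne_zero.2 hc.ne'), neg_sq]
    linarith
  calc (0 : ℝ) ≤ (1 - c) * (descentRate d N + (1 - c)) + c * ((1 + c) * B - (1 - d) * A)
        + c * (d - c) * B + (1 + c) * c ^ 2 * B := by
        have := sub_nonneg.2 hle
        have := sub_nonneg.2 hcd
        have := sub_nonneg.2 hc1.le
        positivity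
    _ = backwardMultiplier c d A B := by
        rw [backwardMultiplier]
        linear_combination -(1 - c) * hrec

lemma descentPotential_gradientStep {A B A' B' : ℝ} (hA : d ^ 2 * A' = A + (1 + d))
    (hB : c ^ 2 * B' = B + (1 - c)) (F : E → ℝ) (G : E → E) (y : E) :
    letI gap := interpolationGap (1 - d) (1 + c) F G
    letI y₁ := gradientStep G y
    letI y₂ := gradientStep G y₁
    (c + d) * descentPotential c d A' B' F G y₁ =
      (c + d) * descentPotential c d A B F G y
        - (forwardMultiplier c d A' B' * gap y y₁ + backwardMultiplier c d A' B' * gap y₁ y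
          + (A' - B') * (d * gap y y₂ + c * gap y₂ y)) := by
  obtain rfl : A = d ^ 2 * A' - (1 + d) := by linarith
  obtain rfl : B = c ^ 2 * B' - (1 - c) := by linarith
  set y₁ := gradientStep G y with hy₁
  set y₂ := gradientStep G y₁ with hy₂
  have hsub₀₁ : y - y₁ = G y := sub_sub_cancel _ _
  have hsub₁₀ : y₁ - y = -G y := sub_sub_cancel_left _ _
  have hsub₀₂ : y - y₂ = G y + G y₁ := by rw [hy₂, gradientStep, hy₁, gradientStep]; abel
  have hsub₂₀ : y₂ - y = -(G y + G y₁) := by rw [← hsub₀₂, neg_sub]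
  simp only [interpolationGap, descentPotential, forwardMultiplier, backwardMultiplier, ← hy₁,
    ← hy₂, hsub₀₁, hsub₁₀, hsub₀₂, hsub₂₀, norm_sub_sq_real, norm_add_sq_real, norm_neg, smul_neg,
    norm_smul, mul_pow, Real.norm_eq_abs, sq_abs, inner_neg_right, inner_sub_left,
    inner_add_right, smul_add, real_inner_smul_left, real_inner_smul_right,
    real_inner_self_eq_norm_sq, real_inner_comm (G y) (G y₁), real_inner_comm (G y) (G y₂),
    real_inner_comm (G y₁) (G y₂)]
  ring

lemma CurvatureBounds.descentPotential_gradientStep_le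
    (h : CurvatureBounds (1 - d) (1 + c) F G) (hc : 0 < c) (hc1 : c < 1) (hcd : c ≤ d)
    (hrate : descentRate (-c) (N + 1) ≤ descentRate d (N + 1)) (y : E) :
    descentPotential c d (descentRate d (N + 1)) (descentRate (-c) (N + 1)) F G
        (gradientStep G y) ≤
      descentPotential c d (descentRate d N) (descentRate (-c) N) F G y := by
  have hd : 0 < d := hc.trans_le hcd
  have hgap := h.interpolationGap_nonneg (by linarith)
  have hforward := forwardMultiplier_descentRate_nonneg hc hc1 hcd (N + 1)
  have hbackward := backwardMultiplier_descentRate_succ_nonneg hc hc1 hcd N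
  have := sub_nonneg.2 hrate
  have hrec_c : c ^ 2 * descentRate (-c) (N + 1) = descentRate (-c) N + (1 - c) := by
    rw [← neg_sq, descentRate.sq_mul_succ (neg_ne_zero.2 hc.ne'), ← sub_eq_add_neg]
  refine le_of_mul_le_mul_left ?_ (by positivity : 0 < c + d)
  rw [descentPotential_gradientStep (descentRate.sq_mul_succ hd.ne' N) hrec_c, sub_le_self_iff]
  have := hgap y (gradientStep G y)
  have := hgap (gradientStep G y) y
  have := hgap y (gradientStep G (gradientStep G y))
  have := hgap (gradientStep G (gradientStep G y)) y
  positivity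

lemma CurvatureBounds.descentPotential_iterate_le
    (h : CurvatureBounds (1 - d) (1 + c) F G) (hc : 0 < c) (hc1 : c < 1) (hcd : c ≤ d)
    (hrate : descentRate (-c) N ≤ descentRate d N) (y : E) :
    descentPotential c d (descentRate d N) (descentRate (-c) N) F G ((gradientStep G)^[N] y) ≤
      4 * (c + d) * F y := by
  induction N with
  | zero => simp [descentPotential, descentRate.zero_right]
  | succ N ih =>
    rw [Function.iterate_succ_apply']
    exact (h.descentPotential_gradientStep_le hc hc1 hcd hrate _).trans
      (ih (descentRate.neg_le_of_neg_le hc hcd hrate N.le_succ))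

end Potential

section GradientDescent

variable {E : Type*} [NormedAddCommGroup E] [InnerProductSpace ℝ E]
  {F : E → ℝ} {G : E → E} {a b c d : ℝ} {N : ℕ}

lemma CurvatureBounds.descent_of_descentRate_eq
    (h : CurvatureBounds (1 - d) (1 + c) F G) (hc : 0 < c) (hc1 : c < 1) (hd : 0 < d)
    (hN : N ≠ 0) (hrate : descentRate (-c) N = descentRate d N) (y : E) :
    descentRate d N * ‖G ((gradientStep G)^[N] y)‖ ^ 2 ≤
      2 * (F y - F ((gradientStep G)^[N] y)) := by
  have hcd : c ≤ d := by
    by_contra! hdc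
    exact (descentRate.neg_lt hd hdc.le hN).ne hrate
  have hle := h.descentPotential_iterate_le hc hc1 hcd hrate.le y
  rw [descentPotential, hrate, sub_self, zero_mul, add_zero] at hle
  refine le_of_mul_le_mul_left ?_ (by positivity : 0 < 2 * (c + d))
  linarith

theorem CurvatureBounds.descent_of_le_descentRate (h : CurvatureBounds a b F G) {m : ℝ}
    (hm : 0 < m) (ha : m ≤ descentRate (1 - a) N) (hb : m ≤ descentRate (1 - b) N)
    (y : E) :
    m * ‖G ((gradientStep G)^[N] y)‖ ^ 2 ≤ 2 * (F y - F ((gradientStep G)^[N] y)) := by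
  have hN : N ≠ 0 := by
    rintro rfl
    exact (hm.trans_le ha).ne' (descentRate.zero_right _)
  obtain ⟨d, hd, hdm⟩ := descentRate.exists_eq hm hN
  obtain ⟨c, hc, hc1, hcm⟩ := descentRate.exists_neg_eq hm hN
  have had : 1 - d ≤ a := by
    by_contra! hlt
    have := descentRate.lt_of_lt hd (by linarith : d < 1 - a) hN
    linarith
  have hbc : b ≤ 1 + c := by
    by_contra! hlt
    have := descentRate.neg_lt_neg hc hc1 (by linarith : c < b - 1) hN
    rw [neg_sub] at this
    linarith
  have hdescent := (h.mono had hbc).descent_of_descentRate_eq hc hc1 hd hN (hcm.trans hdm.symm) y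
  rwa [hdm] at hdescent

lemma CurvatureBounds.norm_sq_le_of_le_descentRate (h : CurvatureBounds a b F G) (hb0 : 0 < b)
    (hF : BddBelow (Set.range F)) {γ m : ℝ} (hγ : 0 < γ) (hm : 0 < m)
    (ha : m ≤ descentRate (1 - γ * a) N) (hb : m ≤ descentRate (1 - γ * b) N) (y : E) :
    1 / (2 * b) * ‖G ((gradientStep (γ • G))^[N] y)‖ ^ 2 ≤
      (F y - ⨅ z, F z) / (1 + γ * b * m) := by
  have hdescent := (h.smul hγ.le).descent_of_le_descentRate hm ha hb y
  set z := (gradientStep (γ • G))^[N] y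
  have hinf := iInf_le_of_forall_le_quadratic hb0 hF (h.upper · z)
  have hdescent' : γ * m / 2 * ‖G z‖ ^ 2 ≤ F y - F z := by
    simp only [Pi.smul_apply, smul_eq_mul, norm_smul, mul_pow, Real.norm_eq_abs, sq_abs] at hdescent
    refine le_of_mul_le_mul_left ?_ hγ
    linarith
  rw [le_div_iff₀ (by positivity)]
  calc 1 / (2 * b) * ‖G z‖ ^ 2 * (1 + γ * b * m)
      = 1 / (2 * b) * ‖G z‖ ^ 2 + γ * m / 2 * ‖G z‖ ^ 2 := by field_simp
    _ ≤ F y - ⨅ z, F z := by linarith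

lemma eq_iterate_of_forall_lt {α : Type*} {T : α → α} {x : ℕ → α}
    (hx : ∀ i < N, x (i + 1) = T (x i)) : x N = T^[N] (x 0) := by
  induction N with
  | zero => rfl
  | succ N ih =>
    rw [hx N N.lt_succ_self, ih fun i hi ↦ hx i (hi.trans N.lt_succ_self),
      Function.iterate_succ_apply']

end GradientDescent

theorem gd_strongly_convex_rate_general
    {E : Type*} [NormedAddCommGroup E] [InnerProductSpace ℝ E]
    (L μ : ℝ) (hL : 0 < L) (hμ : μ ≠ 0) (hμL : μ < L)
    (f : E → ℝ) (g : E → E) (hg : ∀ y, HasFDerivAt f (innerSL ℝ (g y)) y)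
    (hsmooth : ConvexOn ℝ Set.univ (fun z => L / 2 * ‖z‖ ^ 2 - f z))
    (hcurv : ConvexOn ℝ Set.univ (fun z => f z - μ / 2 * ‖z‖ ^ 2))
    (hbdd : BddBelow (Set.range f)) (N : ℕ) (hN : 1 ≤ N)
    (γ : ℝ) (hγ : 0 < γ) (hγL : γ * L < 2) (hγL1 : γ * L ≠ 1) (hγμ1 : γ * μ ≠ 1)
    (x : ℕ → E) (hx : ∀ i < N, x (i + 1) = x i - γ • g (x i)) :
    1 / (2 * L) * ‖g (x N)‖ ^ 2 ≤
      (f (x 0) - ⨅ y, f y) /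
        (1 + γ * L *
          min ((-1 + (1 - γ * μ) ^ (-(2 * (N : ℤ)))) / (γ * μ))
              ((-1 + (1 - γ * L) ^ (-(2 * (N : ℤ)))) / (γ * L))) := by
  have hN0 : N ≠ 0 := Nat.one_le_iff_ne_zero.1 hN
  have hγμL : γ * μ < γ * L := mul_lt_mul_of_pos_left hμL hγ
  have hrate_μ : 0 < descentRate (1 - γ * μ) N :=
    descentRate.pos (by linarith) (sub_ne_zero.2 hγμ1.symm) hN0
  have hrate_L : 0 < descentRate (1 - γ * L) N :=
    descentRate.pos (by linarith) (sub_ne_zero.2 hγL1.symm) hN0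
  have hcurvature : CurvatureBounds μ L f g := .of_convexOn hg hsmooth hcurv
  rw [eq_iterate_of_forall_lt (T := gradientStep (γ • g)) hx,
    ← descentRate.one_sub_eq_div (mul_ne_zero hγ.ne' hμ) hγμ1,
    ← descentRate.one_sub_eq_div (mul_pos hγ hL).ne' hγL1]
  exact hcurvature.norm_sq_le_of_le_descentRate hL hbdd hγ (lt_min hrate_μ hrate_L)
    (min_le_left _ _) (min_le_right _ _) (x 0)

/-- **Exact worst-case rate of gradient descent on smooth strongly convex functions
(Theorem 2 / `thm:strg_cvx_rate`).**
Let `0 < μ < L`, `f ∈ F_{μ,L}`, and run `N ≥ 1` steps of gradient descent with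
constant stepsize `γ`, `0 < γL < 2`, `γL ≠ 1`, `γμ ≠ 1`. Then
`(1/(2L))‖∇f(x_N)‖² ≤ (f(x₀) − f_*) /
  (1 + γL·min{(−1+(1−γμ)^{−2N})/(γμ), (−1+(1−γL)^{−2N})/(γL)})`. -/
theorem gd_strongly_convex_rate
    {E : Type*} [NormedAddCommGroup E] [InnerProductSpace ℝ E] [CompleteSpace E]
    (L μ : ℝ) (hL : 0 < μ) (hμL : μ < L)
    (f : E → ℝ) (hdiff : Differentiable ℝ f)
    (hsmooth : ConvexOn ℝ Set.univ (fun z => L / 2 * ‖z‖ ^ 2 - f z))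
    (hcurv : ConvexOn ℝ Set.univ (fun z => f z - μ / 2 * ‖z‖ ^ 2))
    (N : ℕ) (hN : 1 ≤ N)
    (γ : ℝ) (hγ : 0 < γ) (hγL : γ * L < 2) (hγL1 : γ * L ≠ 1) (hγμ1 : γ * μ ≠ 1)
    (x : ℕ → E) (hx : ∀ i < N, x (i + 1) = x i - γ • gradient f (x i)) :
    1 / (2 * L) * ‖gradient f (x N)‖ ^ 2 ≤
      (f (x 0) - ⨅ y, f y) /
        (1 + γ * L *
          min ((-1 + (1 - γ * μ) ^ (-(2 * (N : ℤ)))) / (γ * μ))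
              ((-1 + (1 - γ * L) ^ (-(2 * (N : ℤ)))) / (γ * L))) := by
  have hg (y : E) : HasFDerivAt f (innerSL ℝ (gradient f y)) y :=
    (hdiff y).hasGradientAt.hasFDerivAt
  exact gd_strongly_convex_rate_general L μ (hL.trans hμL) hL.ne' hμL f _ hg hsmooth hcurv
    (bddBelow_range_of_forall_quadratic_le hL
      ((CurvatureBounds.of_convexOn hg hsmooth hcurv).lower · 0))
    N hN γ hγ hγL hγL1 hγμ1 x hx
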